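/- arXiv:math/9902109 — 2 statements merged into one kernel-verified Lean document; each statement's English description precedes it below -/
import Mathlib

section
/- For all half-integers m, n ∈ ℤ + 1/2 the modified (charged) vertex operator components satisfy the Clifford algebra (fermionic anticommutation) relations on Λ ⊗ ℚ[ℤα]: S̄_m S̄_n + S̄_n S̄_m = 0, S̄*_m S̄*_n + S̄*_n S̄*_m = 0, and S̄_m S̄*_n + S̄*_n S̄_m = δ_{m,n}·id. -/
open MvPolynomial

noncomputable section

/-- The ring of symmetric functions `Λ = ℚ[p₁,p₂,…]`, with the variable `X n`
(for `n : ℕ+`) playing the role of the power sum `p_n`. -/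
abbrev Lam : Type := MvPolynomial ℕ+ ℚ

/-- The power sum `p_n`. -/
def pp (n : ℕ+) : Lam := X n

/-- The family `g` with generating function `∑_k g_k t^k = exp (∑_{n≥1} c n · p_n tⁿ / n)`,
characterized by `g 0 = 1` together with the recursion obtained by differentiating the
generating function:  `(k+1) · g (k+1) = ∑_{i=0}^{k} c (i+1) · p_{i+1} · g (k-i)`. -/
def genFam (c : ℕ → ℚ) : ℕ → Lam
  | 0 => 1
  | (k+1) => (((k : ℚ) + 1)⁻¹) •
      ∑ i ∈ Finset.range (k+1), c (i+1) • (pp ⟨i+1, Nat.succ_pos i⟩ * genFam c (k - i))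
  decreasing_by exact Nat.lt_succ_of_le (Nat.sub_le k i)

/-- The complete homogeneous symmetric function `h_k`,
with generating function `exp (∑ p_n tⁿ/n)`. -/
def hh : ℕ → Lam := genFam fun _ => 1

/-- The elementary symmetric function `e_k`,
with generating function `exp (∑ (−1)^{n−1} p_n tⁿ/n)`. -/
def ee : ℕ → Lam := genFam fun n => (-1)^(n+1)

/-- `h` indexed by `ℤ` (zero for negative indices). -/
def hZ (n : ℤ) : Lam := if 0 ≤ n then hh n.toNat else 0

/-- `e` indexed by `ℤ` (zero for negative indices). -/
def eZ (n : ℤ) : Lam := if 0 ≤ n then ee n.toNat else 0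

/-- The differential operator `∏_i (i·∂/∂p_i)^(α i)` (the factors commute,
so the sorted product is the canonical one). -/
def monOp (α : ℕ+ →₀ ℕ) : Module.End ℚ Lam :=
  ((α.support.sort (· ≤ ·)).map fun (i : ℕ+) => (((i : ℕ) : ℚ) • (pderiv i).toLinearMap) ^ (α i)).prod

/-- `f(∂) P`: substitute `p_i ↦ i·∂/∂p_i` in `f` and apply the result to `P`. -/
def Dop (f : Lam) (P : Lam) : Lam := ∑ α ∈ f.support, f.coeff α • monOp α P

/-- A bound for the weighted degree (`p_i` of weight `i`) of `P`;
`e_j(∂) P = 0 = h_j(∂) P` whenever `j > wbound P`. -/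
def wbound (P : Lam) : ℕ := P.support.sup fun α => α.sum fun i k => (i : ℕ) * k

/-- The vertex operator component `S_n = ∑_{j ≥ max(0,n)} (−1)^j h_{j−n} · e_j(∂)`;
on a given polynomial only the (finitely many) terms with `j ≤ wbound P` act nontrivially. -/
def Sop (n : ℤ) (P : Lam) : Lam :=
  ∑ j ∈ Finset.range (wbound P + 1),
    if n ≤ (j : ℤ) then ((-1 : ℚ)) ^ j • (hZ ((j : ℤ) - n) * Dop (ee j) P) else 0

/-- The dual vertex operator component `S*_n = ∑_{j ≥ max(0,−n)} (−1)^{j+n} e_{j+n} · h_j(∂)`. -/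
def SstarOp (n : ℤ) (P : Lam) : Lam :=
  ∑ j ∈ Finset.range (wbound P + 1),
    if -n ≤ (j : ℤ) then ((-1 : ℚ)) ^ ((j : ℤ) + n) • (eZ ((j : ℤ) + n) * Dop (hh j) P) else 0

/-- The Schur function of an arbitrary integer tuple, via the Jacobi–Trudi determinant
`s_ρ = det (h_{ρ_i − i + j})`. -/
def schur {l : ℕ} (ρ : Fin l → ℤ) : Lam :=
  (Matrix.of fun i j : Fin l => hZ (ρ i - (i.1 : ℤ) + (j.1 : ℤ))).det

/-- The dual Schur function of an integer tuple, `s_{ρ'} = det (e_{ρ_i − i + j})`. -/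
def schurE {l : ℕ} (ρ : Fin l → ℤ) : Lam :=
  (Matrix.of fun i j : Fin l => eZ (ρ i - (i.1 : ℤ) + (j.1 : ℤ))).det


/-- The space `Λ ⊗ ℚ[ℤα]`, realized as finitely supported functions `ℤ →₀ Λ`;
`Finsupp.single m P` represents `P ⊗ e^{mα}`. -/
abbrev VSp : Type := ℤ →₀ Lam

/-- The charged vertex operator component `S̄_{r+1/2}` (half-integers `n ∈ ℤ + 1/2` are
parameterized as `n = r + 1/2`, `r : ℤ`):
`S̄_{r+1/2} (v ⊗ e^{mα}) = S_{(r+1/2)+m+1/2} v ⊗ e^{(m+1)α} = S_{r+m+1} v ⊗ e^{(m+1)α}`. -/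
def Sbar (r : ℤ) (w : VSp) : VSp :=
  w.sum fun m P => Finsupp.single (m+1) (Sop (r + m + 1) P)

/-- The charged dual vertex operator component `S̄*_{r+1/2}`:
`S̄*_{r+1/2} (v ⊗ e^{mα}) = S*_{(r+1/2)+m−1/2} v ⊗ e^{(m−1)α} = S*_{r+m} v ⊗ e^{(m−1)α}`. -/
def SbarStar (r : ℤ) (w : VSp) : VSp :=
  w.sum fun m P => Finsupp.single (m-1) (SstarOp (r + m) P)

/-!
Every vertex operator component is determined by its commutator with the multiplications by `p_n`,
`[V^ε_a, p_n] = -ε V^ε_{a-n}`, and by its value on the vacuum `1`, because the `p_n` generate `Λ`.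
The same holds for anticommutators: if `{V^ε_a, V^σ_b}` sends `1` to an element depending on
`a + b` only, and `ε + σ = 0` or that element vanishes, then the anticommutator is the
multiplication by that element. So the Clifford relations need checking on `1` alone. There
`V^ε_b 1` is the coefficient `g^ε_{-b}` of `exp (ε ∑ p_n tⁿ / n)`. For equal charges,
`V^ε_a g^ε_k = g^ε_{-a} g^ε_k - g^ε_{1-a} g^ε_{k-1}` makes the two products cancel. For opposite
charges they add up to `∑_u g^ε_u g^{-ε}_{-(a+b)-u}`, a coefficient of
`exp (ε ∑ p_n tⁿ / n) * exp (-ε ∑ p_n tⁿ / n) = 1`.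
-/

open scoped IsMulCommutative in
/-- Evaluation of polynomials at a family of pairwise commuting elements of an algebra `A` that
need not be commutative. Mathlib's `MvPolynomial.aeval` asks for a commutative target, so the
evaluation is carried out in the subalgebra generated by the family. -/
def aevalOfCommute {R A σ : Type*} [CommSemiring R] [Semiring A] [Algebra R A] (a : σ → A)
    (ha : ∀ i j, Commute (a i) (a j)) : MvPolynomial σ R →ₐ[R] A :=
  have : IsMulCommutative (Algebra.adjoin R (Set.range a)) :=
    Algebra.isMulCommutative_adjoin R <| by
      rintro _ ⟨i, rfl⟩ _ ⟨j, rfl⟩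
      exact ha i j
  (Algebra.adjoin R (Set.range a)).val.comp
    (aeval fun i => ⟨a i, Algebra.subset_adjoin ⟨i, rfl⟩⟩)

lemma aevalOfCommute_X {R A σ : Type*} [CommSemiring R] [Semiring A] [Algebra R A] {a : σ → A}
    (ha : ∀ i j, Commute (a i) (a j)) (i : σ) :
    aevalOfCommute (R := R) a ha (X i) = a i := by
  simp [aevalOfCommute]

lemma aevalOfCommute_monomial {R A σ : Type*} [CommSemiring R] [Semiring A] [Algebra R A]
    [LinearOrder σ] {a : σ → A} (ha : ∀ i j, Commute (a i) (a j)) (α : σ →₀ ℕ) (r : R) :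
    aevalOfCommute a ha (monomial α r) =
      r • ((α.support.sort (· ≤ ·)).map fun i => a i ^ α i).prod := by
  have hα : monomial α r =
      r • ((α.support.sort (· ≤ ·)).map fun i => (X i : MvPolynomial σ R) ^ α i).prod := by
    rw [monomial_eq, smul_eq_C_mul, Finsupp.prod, Finset.prod,
      ← Finset.sort_eq α.support (· ≤ ·), Multiset.map_coe, Multiset.prod_coe]
  rw [hα, map_smul, map_list_prod, List.map_map]
  simp only [Function.comp_def, map_pow, aevalOfCommute_X]

lemma pderiv_pderiv_comm {R σ : Type*} [CommRing R] (i j : σ) (f : MvPolynomial σ R) :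
    pderiv i (pderiv j f) = pderiv j (pderiv i f) := by
  classical
  have h : ⁅(pderiv i : Derivation R (MvPolynomial σ R) _), pderiv j⁆ = 0 :=
    derivation_ext fun k => by
      rw [Derivation.commutator_apply, pderiv_X, pderiv_X, Pi.single_apply, Pi.single_apply]
      split_ifs <;> simp
  simpa [Derivation.commutator_apply, sub_eq_zero] using congrArg (· f) h

/-- The annihilation operator `b_n = n ∂/∂p_n` of the Heisenberg algebra. -/
def annihilation (n : ℕ+) : Module.End ℚ Lam := ((n : ℕ) : ℚ) • (pderiv n).toLinearMap

lemma annihilation_X_mul (n m : ℕ+) (P : Lam) :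
    annihilation n (X m * P) = X m * annihilation n P + if m = n then (n : ℤ) • P else 0 := by
  rw [annihilation, LinearMap.smul_apply, LinearMap.smul_apply, Derivation.coeFn_coe,
    Derivation.leibniz, pderiv_X, Pi.single_apply]
  split_ifs <;> simp [smul_add, ← Int.cast_smul_eq_zsmul ℚ]

lemma annihilation_commute (m n : ℕ+) : Commute (annihilation m) (annihilation n) := by
  refine Commute.smul_left (Commute.smul_right ?_ _) _
  exact LinearMap.ext fun P => pderiv_pderiv_comm m n P

/-- The algebra homomorphism `f ↦ f(∂)`, that is, `p_n ↦ n ∂/∂p_n`. -/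
def diffOp : Lam →ₐ[ℚ] Module.End ℚ Lam := aevalOfCommute annihilation annihilation_commute

lemma diffOp_X (n : ℕ+) : diffOp (X n) = annihilation n :=
  aevalOfCommute_X annihilation_commute n

lemma Dop_eq_diffOp (f P : Lam) : Dop f P = diffOp f P := by
  conv_rhs => rw [f.as_sum, map_sum, LinearMap.sum_apply]
  refine Finset.sum_congr rfl fun α _ => ?_
  rw [diffOp, aevalOfCommute_monomial]
  rfl

lemma diffOp_X_mul (f : Lam) (n : ℕ+) (P : Lam) :
    diffOp f (X n * P) = X n * diffOp f P + diffOp (annihilation n f) P := by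
  induction f using MvPolynomial.induction_on generalizing P with
  | C c =>
    simp [← algebraMap_eq, annihilation]
  | add f g hf hg =>
    simp only [map_add, LinearMap.add_apply, hf, hg]
    ring
  | mul_X f m hf =>
    rw [mul_comm f, annihilation_X_mul, mul_comm (X m) f, mul_comm (X m) (annihilation n f)]
    simp only [map_add, map_mul, Module.End.mul_apply, LinearMap.add_apply, diffOp_X,
      annihilation_X_mul, hf, eq_comm (a := n)]
    split_ifs with h
    · subst h
      simp only [map_zsmul, LinearMap.smul_apply]
      ring
    · simp

/-- The coefficient of `t^k` in `exp (ε ∑ p_n tⁿ / n)`, indexed by `ℤ`. -/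
def expCoeff (ε k : ℤ) : Lam := if 0 ≤ k then genFam (fun _ => ε) k.toNat else 0

lemma expCoeff_natCast (ε : ℤ) (k : ℕ) : expCoeff ε k = genFam (fun _ => ε) k := by
  simp [expCoeff]

lemma expCoeff_of_neg (ε : ℤ) {k : ℤ} (hk : k < 0) : expCoeff ε k = 0 :=
  if_neg hk.not_ge

lemma expCoeff_zero (ε : ℤ) : expCoeff ε 0 = 1 := by
  simp [expCoeff, genFam]

/-- The range is any `N ≥ k`, so that recurrences for different `k` can share their range. -/
lemma expCoeff_recurrence (ε : ℤ) {k : ℤ} {N : ℕ} (hk : k ≤ N) :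
    k • expCoeff ε k = ε • ∑ i ∈ Finset.range N, X i.succPNat * expCoeff ε (k - (i + 1)) := by
  have hzero {i : ℕ} (hi : k ≤ i) : X i.succPNat * expCoeff ε (k - (i + 1)) = 0 := by
    rw [expCoeff_of_neg ε (by omega), mul_zero]
  rcases le_or_gt k 0 with hk0 | hk0
  · rw [Finset.sum_eq_zero fun i _ => hzero (by omega), smul_zero]
    obtain rfl | hk0 := hk0.eq_or_lt
    · rw [zero_smul]
    · rw [expCoeff_of_neg ε hk0, smul_zero]
  obtain ⟨k, rfl⟩ : ∃ m : ℕ, k = (m + 1 : ℕ) := ⟨(k - 1).toNat, by omega⟩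
  have htrunc : ∑ i ∈ Finset.range (k + 1),
        X i.succPNat * expCoeff ε (((k + 1 : ℕ) : ℤ) - (i + 1)) =
      ∑ i ∈ Finset.range N, X i.succPNat * expCoeff ε (((k + 1 : ℕ) : ℤ) - (i + 1)) :=
    Finset.sum_subset (Finset.range_subset_range.mpr (Nat.cast_le.mp hk))
      fun i _ hi => hzero (by simpa using hi)
  rw [← htrunc, expCoeff_natCast, genFam,
    ← Int.cast_smul_eq_zsmul ℚ, smul_smul, Int.cast_natCast, Nat.cast_succ,
    mul_inv_cancel₀ (by positivity), one_smul, Finset.smul_sum]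
  refine Finset.sum_congr rfl fun i hi => ?_
  have hik : ((k + 1 : ℕ) : ℤ) - (i + 1) = (k - i : ℕ) := by
    have := Finset.mem_range.mp hi
    omega
  rw [hik, expCoeff_natCast, Int.cast_smul_eq_zsmul]
  rfl

lemma genFam_pow_mul (r : ℚ) (c : ℕ → ℚ) (k : ℕ) :
    genFam (fun n => r ^ n * c n) k = r ^ k • genFam c k := by
  induction k using Nat.strong_induction_on with
  | _ k ih =>
    cases k with
    | zero => simp [genFam]
    | succ k =>
      rw [genFam, genFam, smul_comm (r ^ (k + 1)), Finset.smul_sum (r := r ^ (k + 1))]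
      refine congrArg _ (Finset.sum_congr rfl fun i hi => ?_)
      have hik : r ^ (k + 1) = r ^ (i + 1) * r ^ (k - i) := by
        rw [← pow_add]
        congr 1
        have := Finset.mem_range.mp hi
        omega
      rw [ih (k - i) (by omega), mul_smul_comm, smul_smul, smul_smul, hik]
      congr 1
      ring

lemma hh_eq_expCoeff (k : ℕ) : hh k = expCoeff 1 k := by
  simp [expCoeff_natCast, hh]

lemma ee_eq_expCoeff (k : ℕ) : ee k = (-1 : ℚ) ^ k • expCoeff (-1) k := by
  simp [expCoeff_natCast, ee, ← genFam_pow_mul, pow_succ]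

lemma annihilation_expCoeff (ε : ℤ) (n : ℕ+) (k : ℤ) :
    annihilation n (expCoeff ε k) = ε • expCoeff ε (k - n) := by
  obtain ⟨N, hN⟩ : ∃ N : ℕ, k < N := ⟨k.toNat + 1, by omega⟩
  induction N generalizing k with
  | zero =>
    rw [expCoeff_of_neg ε hN, expCoeff_of_neg ε (by have := n.pos; omega), map_zero, smul_zero]
  | succ N ih =>
    obtain rfl | hk := eq_or_ne k 0
    · rw [expCoeff_zero, expCoeff_of_neg ε (by have := n.pos; omega)]
      simp [annihilation]
    obtain ⟨M, hkM, hnM⟩ : ∃ M : ℕ, k ≤ M ∧ n < M := ⟨k.toNat + n + 1, by omega, by omega⟩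
    have hsuccPNat (i : ℕ) : i.succPNat = n ↔ i = n.natPred := Equiv.pnatEquivNat.symm_apply_eq
    refine smul_right_injective Lam hk ?_
    calc k • annihilation n (expCoeff ε k)
      _ = ε • ∑ i ∈ Finset.range M,
            annihilation n (X i.succPNat * expCoeff ε (k - (i + 1))) := by
          rw [← map_zsmul, expCoeff_recurrence ε hkM, map_zsmul, map_sum]
      _ = ε • ∑ i ∈ Finset.range M, (ε • (X i.succPNat * expCoeff ε (k - n - (i + 1))) +
            if i = n.natPred then (n : ℤ) • expCoeff ε (k - n) else 0) := by
          congr 1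
          refine Finset.sum_congr rfl fun i _ => ?_
          rw [annihilation_X_mul, ih _ (by omega), mul_smul_comm, sub_right_comm]
          simp only [hsuccPNat]
          split_ifs with h
          · rw [h, sub_right_comm, ← Nat.cast_succ, ← PNat.natPred_add_one n]
          · rfl
      _ = ε • ((k - n) • expCoeff ε (k - n) + (n : ℤ) • expCoeff ε (k - n)) := by
          rw [Finset.sum_add_distrib, ← Finset.smul_sum,
            ← expCoeff_recurrence ε (show k - n ≤ M by omega), Finset.sum_ite_eq',
            if_pos (Finset.mem_range.mpr (by have := n.natPred_add_one; omega))]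
      _ = k • ε • expCoeff ε (k - n) := by
          rw [← add_smul, sub_add_cancel, smul_comm]

lemma diffOp_expCoeff_X_mul (δ j : ℤ) (n : ℕ+) (P : Lam) :
    diffOp (expCoeff δ j) (X n * P) =
      X n * diffOp (expCoeff δ j) P + δ • diffOp (expCoeff δ (j - n)) P := by
  rw [diffOp_X_mul, annihilation_expCoeff, map_zsmul, LinearMap.smul_apply]

lemma diffOp_expCoeff_recurrence (δ : ℤ) {j : ℤ} {N : ℕ} (hj : j ≤ N) (P : Lam) :
    j • diffOp (expCoeff δ j) P =
      δ • ∑ i ∈ Finset.range N, diffOp (expCoeff δ (j - (i + 1))) (annihilation i.succPNat P) := by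
  simpa only [map_zsmul, map_sum, LinearMap.smul_apply, LinearMap.sum_apply, mul_comm (X _),
    map_mul, diffOp_X, Module.End.mul_apply]
    using congrArg (fun f => diffOp f P) (expCoeff_recurrence δ hj)

/-- This is the recurrence of the binomial coefficients: `exp (δ ∑ b_n z⁻ⁿ / n)` multiplies
`exp (ε ∑ p_n tⁿ / n)` by `(1 - t / z)^{-δ ε}`. -/
lemma succ_smul_diffOp_expCoeff_expCoeff (δ ε j k : ℤ) :
    (j + 1) • diffOp (expCoeff δ (j + 1)) (expCoeff ε k) =
      (j + δ * ε) • diffOp (expCoeff δ j) (expCoeff ε (k - 1)) := by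
  obtain ⟨N, hN⟩ : ∃ N : ℕ, j ≤ N := ⟨j.toNat, by omega⟩
  have h := diffOp_expCoeff_recurrence δ hN (expCoeff ε (k - 1))
  rw [diffOp_expCoeff_recurrence δ (show j + 1 ≤ (N + 1 : ℕ) by omega), Finset.sum_range_succ',
    smul_add, add_smul, h, mul_smul]
  simp only [annihilation_expCoeff, map_zsmul]
  congr 1
  · congr 1
    refine Finset.sum_congr rfl fun i _ => ?_
    simp only [Nat.succPNat_coe]
    push_cast
    ring_nf
  · simp

lemma diffOp_expCoeff_one (δ j : ℤ) :
    diffOp (expCoeff δ j) 1 = if j = 0 then 1 else 0 := by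
  split_ifs with hj
  · rw [hj, expCoeff_zero, map_one diffOp, Module.End.one_apply]
  · obtain ⟨i, rfl⟩ : ∃ i, j = i + 1 := ⟨j - 1, by ring⟩
    refine (smul_eq_zero_iff_right hj).mp ?_
    rw [← expCoeff_zero 1, succ_smul_diffOp_expCoeff_expCoeff, expCoeff_of_neg 1 (by norm_num),
      map_zero, smul_zero]

lemma diffOp_expCoeff_expCoeff_of_mul_eq_one {δ ε : ℤ} (h : δ * ε = 1) (j : ℕ) (k : ℤ) :
    diffOp (expCoeff δ j) (expCoeff ε k) = expCoeff ε (k - j) := by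
  induction j generalizing k with
  | zero => simp [expCoeff_zero]
  | succ j ih =>
    have hj : (j : ℤ) + 1 ≠ 0 := by positivity
    refine smul_right_injective Lam hj ?_
    simp only [Nat.cast_succ]
    rw [succ_smul_diffOp_expCoeff_expCoeff, h, ih, sub_sub, add_comm 1]

lemma diffOp_expCoeff_one_expCoeff (δ ε k : ℤ) :
    diffOp (expCoeff δ 1) (expCoeff ε k) = (δ * ε) • expCoeff ε (k - 1) := by
  simpa [expCoeff_zero] using succ_smul_diffOp_expCoeff_expCoeff δ ε 0 k

lemma diffOp_expCoeff_expCoeff_of_mul_eq_neg_one {δ ε j : ℤ} (h : δ * ε = -1) (hj : 2 ≤ j)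
    (k : ℤ) : diffOp (expCoeff δ j) (expCoeff ε k) = 0 := by
  induction j, hj using Int.leInduction generalizing k with
  | base =>
    simpa [h] using succ_smul_diffOp_expCoeff_expCoeff δ ε 1 k
  | succ j hj ih =>
    refine (smul_eq_zero_iff_right (show j + 1 ≠ 0 by omega)).mp ?_
    rw [succ_smul_diffOp_expCoeff_expCoeff, ih, smul_zero]

lemma diffOp_expCoeff_monomial_eq_zero (δ : ℤ) {j : ℤ} (α : ℕ+ →₀ ℕ) (r : ℚ)
    (hj : ((α.sum fun i k => (i : ℕ) * k : ℕ) : ℤ) < j) :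
    diffOp (expCoeff δ j) (monomial α r) = 0 := by
  induction hd : α.degree generalizing α j with
  | zero =>
    obtain rfl : α = 0 := (Finsupp.degree_eq_zero_iff α).mp hd
    have hj0 : j ≠ 0 := by simpa using hj.ne'
    rw [monomial_zero', ← mul_one (C r), ← smul_eq_C_mul, map_smul, diffOp_expCoeff_one,
      if_neg hj0, smul_zero]
  | succ d ih =>
    obtain ⟨n, hn⟩ : ∃ n, α n ≠ 0 := by
      by_contra! h
      simp [show α = 0 from Finsupp.ext h] at hd
    obtain ⟨β, rfl⟩ : ∃ β, α = β + Finsupp.single n 1 :=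
      ⟨α - Finsupp.single n 1, (Finsupp.sub_add_single_one_cancel hn).symm⟩
    rw [Finsupp.sum_add_index' (by simp) (by simp [mul_add]),
      Finsupp.sum_single_index (by simp)] at hj
    have hβ : β.degree = d := by simpa using hd
    rw [monomial_add_single, pow_one, mul_comm, diffOp_expCoeff_X_mul, ih β (by omega) hβ,
      ih β (by omega) hβ, mul_zero, smul_zero, add_zero]

lemma diffOp_expCoeff_eq_zero (δ : ℤ) {j : ℤ} {P : Lam} (hj : (wbound P : ℤ) < j) :
    diffOp (expCoeff δ j) P = 0 := by
  conv_lhs => rw [P.as_sum, map_sum]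
  refine Finset.sum_eq_zero fun α hα => diffOp_expCoeff_monomial_eq_zero δ α _ (hj.trans_le' ?_)
  exact Nat.cast_le.mpr (Finset.le_sup (f := fun α : ℕ+ →₀ ℕ => α.sum fun i k => (i : ℕ) * k) hα)

lemma support_diffOp_expCoeff_subset (δ : ℤ) (P : Lam) :
    (Function.support fun j => diffOp (expCoeff δ j) P) ⊆ Set.Icc 0 (wbound P : ℤ) := by
  refine Function.support_subset_iff'.mpr fun j hj => ?_
  obtain hj | hj : j < 0 ∨ (wbound P : ℤ) < j := by
    rwa [Set.mem_Icc, not_and_or, not_le, not_le] at hj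
  · rw [expCoeff_of_neg δ hj, map_zero, LinearMap.zero_apply]
  · exact diffOp_expCoeff_eq_zero δ hj

lemma hasFiniteSupport_diffOp_expCoeff (δ : ℤ) (P : Lam) :
    Function.HasFiniteSupport fun j => diffOp (expCoeff δ j) P :=
  (Set.finite_Icc _ _).subset (support_diffOp_expCoeff_subset δ P)

/-- The coefficient of `z^{-a}` in the vertex operator
`exp (ε ∑ b_{-n} zⁿ / n) exp (-ε ∑ b_n z⁻ⁿ / n)` of charge `ε`. The sum over `j` is locally
finite. -/
def vertexOp (ε a : ℤ) : Module.End ℚ Lam where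
  toFun P := ∑ᶠ j, expCoeff ε (j - a) * diffOp (expCoeff (-ε) j) P
  map_add' P Q := by
    simp only [map_add, mul_add]
    exact finsum_add_distrib ((hasFiniteSupport_diffOp_expCoeff _ P).fun_mul_right _)
      ((hasFiniteSupport_diffOp_expCoeff _ Q).fun_mul_right _)
  map_smul' c P := by
    simp only [map_smul, mul_smul_comm, RingHom.id_apply, smul_finsum]

lemma vertexOp_apply (ε a : ℤ) (P : Lam) :
    vertexOp ε a P = ∑ᶠ j, expCoeff ε (j - a) * diffOp (expCoeff (-ε) j) P := rfl

lemma vertexOp_eq_sum_range (ε a : ℤ) (P : Lam) :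
    vertexOp ε a P = ∑ j ∈ Finset.range (wbound P + 1),
      expCoeff ε (j - a) * diffOp (expCoeff (-ε) j) P := by
  rw [vertexOp_apply, finsum_eq_sum_of_support_subset
    (s := (Finset.range (wbound P + 1)).map Nat.castEmbedding), Finset.sum_map]
  · rfl
  · refine (Function.support_mul_subset_right _ _).trans fun j hj => ?_
    have hj := support_diffOp_expCoeff_subset _ _ hj
    lift j to ℕ using hj.1
    simpa [Nat.lt_succ_iff] using hj.2

lemma Sop_eq_vertexOp (n : ℤ) (P : Lam) : Sop n P = vertexOp 1 n P := by
  rw [vertexOp_eq_sum_range, Sop]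
  refine Finset.sum_congr rfl fun j _ => ?_
  split_ifs with hj
  · rw [hZ, if_pos (sub_nonneg.mpr hj), hh_eq_expCoeff, Int.toNat_of_nonneg (sub_nonneg.mpr hj),
      Dop_eq_diffOp, ee_eq_expCoeff, map_smul, LinearMap.smul_apply, mul_smul_comm, smul_smul,
      ← mul_pow, neg_mul_neg, one_mul, one_pow, one_smul]
  · rw [expCoeff_of_neg 1 (by omega), zero_mul]

lemma SstarOp_eq_vertexOp (n : ℤ) (P : Lam) : SstarOp n P = vertexOp (-1) (-n) P := by
  rw [vertexOp_eq_sum_range, SstarOp]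
  refine Finset.sum_congr rfl fun j _ => ?_
  rw [sub_neg_eq_add, neg_neg]
  split_ifs with hj
  · obtain ⟨k, hk⟩ := Int.eq_ofNat_of_zero_le (neg_le_iff_add_nonneg.mp hj)
    rw [hk, eZ, if_pos k.cast_nonneg, Int.toNat_natCast, ee_eq_expCoeff, Dop_eq_diffOp,
      hh_eq_expCoeff, zpow_natCast, smul_mul_assoc, smul_smul,
      ← mul_pow, neg_mul_neg, one_mul, one_pow, one_smul]
  · rw [expCoeff_of_neg (-1) (by omega), zero_mul]

lemma vertexOp_X_mul (ε a : ℤ) (n : ℕ+) (P : Lam) :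
    vertexOp ε a (X n * P) = X n * vertexOp ε a P - ε • vertexOp ε (a - n) P := by
  have hshift : vertexOp ε (a - n) P =
      ∑ᶠ j, expCoeff ε (j - a) * diffOp (expCoeff (-ε) (j - n)) P := by
    rw [vertexOp_apply, ← finsum_comp_equiv (Equiv.subRight (n : ℤ))]
    simp only [Equiv.subRight_apply, sub_sub_sub_cancel_right]
  have hfin := hasFiniteSupport_diffOp_expCoeff (-ε) P
  have hfin_shift := hfin.fun_comp_of_injective (sub_left_injective (b := (n : ℤ)))
  simp only [hshift, vertexOp_apply, diffOp_expCoeff_X_mul, mul_add, mul_left_comm _ (X n),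
    mul_smul_comm]
  rw [finsum_add_distrib ((hfin.fun_mul_right _).fun_mul_right _)
    ((hfin_shift.fun_mul_right _).fun_smul_right _), ← mul_finsum, ← smul_finsum, neg_smul,
    sub_eq_add_neg]

/-- The generating series `exp (ε ∑ p_n tⁿ / n)`. -/
def expSeries (ε : ℤ) : PowerSeries Lam := .mk fun k => expCoeff ε k

lemma derivative_expSeries (ε : ℤ) :
    PowerSeries.derivative Lam (expSeries ε) =
      ε • (PowerSeries.mk (fun n => X n.succPNat) * expSeries ε) := by
  ext1 k
  have h := expCoeff_recurrence ε (le_refl ((k + 1 : ℕ) : ℤ))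
  rw [PowerSeries.coeff_derivative, map_zsmul, PowerSeries.coeff_mul,
    Finset.Nat.sum_antidiagonal_eq_sum_range_succ_mk]
  simp only [expSeries, PowerSeries.coeff_mk]
  rw [← Nat.cast_succ, mul_comm, ← nsmul_eq_mul, ← natCast_zsmul, h]
  refine congrArg _ (Finset.sum_congr rfl fun i hi => ?_)
  rw [Nat.cast_sub (Finset.mem_range_succ_iff.mp hi), Nat.cast_succ, add_sub_add_right_eq_sub]

lemma expSeries_mul_expSeries_neg (ε : ℤ) : expSeries ε * expSeries (-ε) = 1 := by
  refine PowerSeries.derivative.ext ?_ ?_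
  · rw [Derivation.leibniz, derivative_expSeries, derivative_expSeries]
    simp only [smul_eq_mul, neg_smul, mul_neg, mul_smul_comm]
    rw [mul_left_comm, mul_left_comm (expSeries (-ε)), mul_comm (expSeries (-ε)), neg_add_cancel,
      Derivation.map_one_eq_zero]
  · simp [expSeries, expCoeff_zero]

lemma support_expCoeff_mul_expCoeff_subset (ε σ N : ℤ) :
    (Function.support fun u => expCoeff ε u * expCoeff σ (N - u)) ⊆ Set.Icc 0 N := by
  refine Function.support_subset_iff'.mpr fun u hu => ?_
  obtain hu | hu : u < 0 ∨ N < u := by rwa [Set.mem_Icc, not_and_or, not_le, not_le] at hu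
  · rw [expCoeff_of_neg ε hu, zero_mul]
  · rw [expCoeff_of_neg σ (sub_neg.mpr hu), mul_zero]

lemma finsum_expCoeff_mul_expCoeff_neg (ε N : ℤ) :
    ∑ᶠ u, expCoeff ε u * expCoeff (-ε) (N - u) = if N = 0 then 1 else 0 := by
  have hsupp := support_expCoeff_mul_expCoeff_subset ε (-ε) N
  rcases lt_or_ge N 0 with hN | hN
  · rw [Set.Icc_eq_empty hN.not_ge, Set.subset_empty_iff, Function.support_eq_empty_iff] at hsupp
    rw [if_neg hN.ne, hsupp]
    exact finsum_zero
  lift N to ℕ using hN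
  rw [finsum_eq_sum_of_support_subset (s := (Finset.range (N + 1)).map Nat.castEmbedding),
    Finset.sum_map]
  · have h := congrArg (PowerSeries.coeff N) (expSeries_mul_expSeries_neg ε)
    rw [PowerSeries.coeff_mul, Finset.Nat.sum_antidiagonal_eq_sum_range_succ_mk,
      PowerSeries.coeff_one] at h
    simp only [Nat.cast_eq_zero, ← h]
    refine Finset.sum_congr rfl fun u hu => ?_
    simp [expSeries, Nat.cast_sub (Finset.mem_range_succ_iff.mp hu)]
  · refine hsupp.trans fun u hu => ?_
    lift u to ℕ using hu.1
    simpa [Nat.lt_succ_iff] using hu.2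

lemma vertexOp_one (ε a : ℤ) : vertexOp ε a 1 = expCoeff ε (-a) := by
  rw [vertexOp_apply, finsum_eq_single _ 0 fun j hj => by
    rw [diffOp_expCoeff_one, if_neg hj, mul_zero]]
  simp [diffOp_expCoeff_one]

lemma vertexOp_expCoeff_of_mul_eq_one {ε σ : ℤ} (h : ε * σ = 1) (a k : ℤ) :
    vertexOp ε a (expCoeff σ k) =
      expCoeff ε (-a) * expCoeff σ k - expCoeff ε (1 - a) * expCoeff σ (k - 1) := by
  have hneg : -ε * σ = -1 := by rw [neg_mul, h]
  rw [vertexOp_apply, finsum_eq_sum_of_support_subset (s := {0, 1}),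
    Finset.sum_pair zero_ne_one, expCoeff_zero, diffOp_expCoeff_one_expCoeff, hneg]
  · simp [sub_eq_add_neg]
  · refine Function.support_subset_iff'.mpr fun j hj => ?_
    obtain hj | hj : j < 0 ∨ 2 ≤ j := by
      simp only [Finset.coe_pair, Set.mem_insert_iff, Set.mem_singleton_iff] at hj
      omega
    · rw [expCoeff_of_neg (-ε) hj, map_zero, LinearMap.zero_apply, mul_zero]
    · rw [diffOp_expCoeff_expCoeff_of_mul_eq_neg_one hneg hj, mul_zero]

lemma vertexOp_expCoeff_of_mul_eq_neg_one {ε σ : ℤ} (h : ε * σ = -1) (a k : ℤ) :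
    vertexOp ε a (expCoeff σ k) =
      ∑ᶠ j : ℤ, if 0 ≤ j then expCoeff ε (j - a) * expCoeff σ (k - j) else 0 := by
  refine finsum_congr fun j => ?_
  split_ifs with hj
  · lift j to ℕ using hj
    rw [diffOp_expCoeff_expCoeff_of_mul_eq_one (by rw [neg_mul, h, neg_neg])]
  · rw [expCoeff_of_neg (-ε) (by omega), map_zero, LinearMap.zero_apply, mul_zero]

/-- The coefficient of `z^{-a} w^{-b}` in `V^ε(z) V^σ(w) + (w / z)^{ε σ} V^σ(w) V^ε(z)`, where
`V^ε(z)` is the vertex operator of charge `ε`. The power of `w / z` is what the zero modes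
`e^{±α} z^{±∂}` contribute to the anticommutator of the charged vertex operators. -/
def vertexAnticomm (ε σ a b : ℤ) : Module.End ℚ Lam :=
  vertexOp ε a * vertexOp σ b + vertexOp σ (b + ε * σ) * vertexOp ε (a - ε * σ)

lemma vertexAnticomm_X_mul (ε σ a b : ℤ) (n : ℕ+) (P : Lam) :
    vertexAnticomm ε σ a b (X n * P) = X n * vertexAnticomm ε σ a b P -
      ε • vertexAnticomm ε σ (a - n) b P - σ • vertexAnticomm ε σ a (b - n) P := by
  simp only [vertexAnticomm, LinearMap.add_apply, Module.End.mul_apply, vertexOp_X_mul, map_sub,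
    map_zsmul, sub_right_comm a (n : ℤ), sub_add_eq_add_sub b,
    mul_add, smul_add]
  abel

lemma vertexAnticomm_apply_eq_mul {ε σ : ℤ} {d : ℤ → Lam} (hd : ∀ N, (ε + σ) • d N = 0)
    (hone : ∀ a b, vertexAnticomm ε σ a b 1 = d (a + b)) (a b : ℤ) (P : Lam) :
    vertexAnticomm ε σ a b P = P * d (a + b) := by
  induction P using MvPolynomial.induction_on generalizing a b with
  | C c => rw [← mul_one (C c), ← smul_eq_C_mul, map_smul, hone, smul_mul_assoc, one_mul]
  | add P Q hP hQ => rw [map_add, hP, hQ, add_mul]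
  | mul_X P n hP =>
    have hN : a - n + b = a + (b - n) := by ring
    rw [mul_comm P, vertexAnticomm_X_mul, hP, hP, hP, hN, sub_sub, ← add_smul, ← mul_smul_comm, hd,
      mul_zero, sub_zero, mul_assoc]

lemma vertexAnticomm_self {ε : ℤ} (hε : ε * ε = 1) (a b : ℤ) : vertexAnticomm ε ε a b = 0 := by
  refine LinearMap.ext fun P => ?_
  refine (vertexAnticomm_apply_eq_mul (d := 0) (fun _ => smul_zero _) (fun a b => ?_) a b P).trans
    (mul_zero P)
  simp only [vertexAnticomm, LinearMap.add_apply, Module.End.mul_apply, vertexOp_one,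
    vertexOp_expCoeff_of_mul_eq_one hε, hε, Pi.zero_apply]
  ring_nf

/-- The two products contribute the parts `u ≥ -a` and `u < -a` of the convolution of the
coefficients of `exp (ε ∑ p_n tⁿ / n)` and of its inverse. -/
lemma vertexAnticomm_neg_apply_one {ε : ℤ} (hε : ε * ε = 1) (a b : ℤ) :
    vertexAnticomm ε (-ε) a b 1 = if a + b = 0 then 1 else 0 := by
  have hε' : ε * -ε = -1 := by rw [mul_neg, hε]
  let f (u : ℤ) : Lam := expCoeff ε u * expCoeff (-ε) (-(a + b) - u)
  have hfin : f.HasFiniteSupport :=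
    (Set.finite_Icc _ _).subset (support_expCoeff_mul_expCoeff_subset _ _ _)
  have hfirst : vertexOp ε a (expCoeff (-ε) (-b)) = ∑ᶠ u, if -a ≤ u then f u else 0 := by
    rw [vertexOp_expCoeff_of_mul_eq_neg_one hε', ← finsum_comp_equiv (Equiv.addRight a)]
    refine finsum_congr fun u => ?_
    simp only [f, Equiv.coe_addRight, add_sub_cancel_right, ← neg_le_iff_add_nonneg]
    ring_nf
  have hsecond : vertexOp (-ε) (b - 1) (expCoeff ε (-(a + 1))) =
      ∑ᶠ u, if u < -a then f u else 0 := by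
    rw [vertexOp_expCoeff_of_mul_eq_neg_one (by rw [mul_comm, hε']),
      ← finsum_comp_equiv (Equiv.subLeft (-(a + 1)))]
    refine finsum_congr fun u => ?_
    refine if_congr ?_ ?_ rfl
    · rw [Equiv.subLeft_apply]
      omega
    · simp only [f, Equiv.subLeft_apply]
      ring_nf
  calc vertexAnticomm ε (-ε) a b 1
    _ = vertexOp ε a (expCoeff (-ε) (-b)) + vertexOp (-ε) (b - 1) (expCoeff ε (-(a + 1))) := by
      rw [vertexAnticomm, LinearMap.add_apply, Module.End.mul_apply, Module.End.mul_apply,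
        vertexOp_one, vertexOp_one, hε', sub_neg_eq_add, ← sub_eq_add_neg]
    _ = ∑ᶠ u, f u := by
      rw [hfirst, hsecond, ← finsum_add_distrib (hfin.subset ?_) (hfin.subset ?_)]
      · refine finsum_congr fun u => ?_
        rcases lt_or_ge u (-a) with hu | hu
        · rw [if_neg hu.not_ge, if_pos hu, zero_add]
        · rw [if_pos hu, if_neg hu.not_gt, add_zero]
      all_goals
        refine fun u hu hfu => hu ?_
        simp only [hfu, ite_self]
    _ = if a + b = 0 then 1 else 0 := by
      simp only [f, finsum_expCoeff_mul_expCoeff_neg, neg_eq_zero]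

lemma vertexAnticomm_neg {ε : ℤ} (hε : ε * ε = 1) (a b : ℤ) :
    vertexAnticomm ε (-ε) a b = if a + b = 0 then 1 else 0 := by
  refine LinearMap.ext fun P => ?_
  rw [vertexAnticomm_apply_eq_mul (d := fun N => if N = 0 then 1 else 0)
    (fun N => by rw [add_neg_cancel, zero_smul]) (vertexAnticomm_neg_apply_one hε)]
  split_ifs <;> simp

/-- The modes of the vertex operator of charge `ε` on `Λ ⊗ ℚ[ℤα]`, with integral index:
`v ⊗ e^{mα} ↦ V^ε_{a + ε m} v ⊗ e^{(m + ε)α}`. -/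
def chargedVertexOp (ε a : ℤ) : Module.End ℚ VSp :=
  Finsupp.lsum ℚ fun m => Finsupp.lsingle (m + ε) ∘ₗ vertexOp ε (a + ε * m)

lemma chargedVertexOp_single (ε a m : ℤ) (P : Lam) :
    chargedVertexOp ε a (Finsupp.single m P) =
      Finsupp.single (m + ε) (vertexOp ε (a + ε * m) P) := by
  simp [chargedVertexOp]

lemma Sbar_eq_chargedVertexOp (r : ℤ) (w : VSp) : Sbar r w = chargedVertexOp 1 (r + 1) w := by
  simp [Sbar, chargedVertexOp, Function.comp_def, Sop_eq_vertexOp, add_right_comm]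

lemma SbarStar_eq_chargedVertexOp (r : ℤ) (w : VSp) :
    SbarStar r w = chargedVertexOp (-1) (-r) w := by
  simp [SbarStar, chargedVertexOp, Function.comp_def, SstarOp_eq_vertexOp, sub_eq_add_neg, add_comm]

lemma chargedVertexOp_anticomm_single (ε σ a b m : ℤ) (P : Lam) :
    (chargedVertexOp ε a * chargedVertexOp σ b + chargedVertexOp σ b * chargedVertexOp ε a)
        (Finsupp.single m P) =
      Finsupp.single (m + ε + σ)
        (vertexAnticomm ε σ (a + ε * (m + σ)) (b + σ * m) P) := by
  have hb : b + σ * (m + ε) = b + σ * m + ε * σ := by ring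
  have ha : a + ε * m = a + ε * (m + σ) - ε * σ := by ring
  rw [LinearMap.add_apply, Module.End.mul_apply, Module.End.mul_apply]
  simp only [chargedVertexOp_single]
  rw [add_right_comm m σ, ← Finsupp.single_add, hb, ha]
  rfl

lemma chargedVertexOp_anticomm_self {ε : ℤ} (hε : ε * ε = 1) (a b : ℤ) :
    chargedVertexOp ε a * chargedVertexOp ε b + chargedVertexOp ε b * chargedVertexOp ε a = 0 := by
  refine Finsupp.lhom_ext fun m P => ?_
  rw [chargedVertexOp_anticomm_single, vertexAnticomm_self hε, LinearMap.zero_apply,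
    Finsupp.single_zero, LinearMap.zero_apply]

lemma chargedVertexOp_anticomm_neg {ε : ℤ} (hε : ε * ε = 1) (a b : ℤ) :
    chargedVertexOp ε a * chargedVertexOp (-ε) b + chargedVertexOp (-ε) b * chargedVertexOp ε a =
      if a + b = 1 then 1 else 0 := by
  refine Finsupp.lhom_ext fun m P => ?_
  have hab : a + ε * (m + -ε) + (b + -ε * m) = a + b - 1 := by linear_combination -hε
  rw [chargedVertexOp_anticomm_single, vertexAnticomm_neg hε, add_neg_cancel_right, hab]
  simp only [sub_eq_zero]
  split_ifs <;> simp

/-- the Clifford algebra (fermionic anticommutation) relations for the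
modified (charged) vertex operators on `Λ ⊗ ℚ[ℤα]`, for half-integers `m = r + 1/2`,
`n = s + 1/2` (`r, s : ℤ`):
`S̄_m S̄_n + S̄_n S̄_m = 0`, `S̄*_m S̄*_n + S̄*_n S̄*_m = 0`, and
`S̄_m S̄*_n + S̄*_n S̄_m = δ_{m,n} · id`. -/
theorem charged_vertex_clifford_relations (r s : ℤ) (w : VSp) :
    Sbar r (Sbar s w) + Sbar s (Sbar r w) = 0 ∧
    SbarStar r (SbarStar s w) + SbarStar s (SbarStar r w) = 0 ∧
    Sbar r (SbarStar s w) + SbarStar s (Sbar r w) = (if r = s then w else 0) := by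
  simp only [Sbar_eq_chargedVertexOp, SbarStar_eq_chargedVertexOp]
  refine ⟨?_, ?_, ?_⟩
  · simpa using LinearMap.congr_fun (chargedVertexOp_anticomm_self (one_mul 1) (r + 1) (s + 1)) w
  · simpa using LinearMap.congr_fun (chargedVertexOp_anticomm_self (ε := -1) rfl (-r) (-s)) w
  · have hrs : r + 1 + -s = 1 ↔ r = s := by omega
    have h := LinearMap.congr_fun (chargedVertexOp_anticomm_neg (one_mul 1) (r + 1) (-s)) w
    simp only [hrs] at h
    refine h.trans ?_
    split_ifs <;> rfl
end
end

section
/- The Schur functions form an orthonormal family for the Hall inner product: for all partitions λ and μ, ⟨s_λ, s_μ⟩ = δ_{λ,μ}, where s_λ = det(h_{λ_i−i+j})_{1≤i,j≤l(λ)}. -/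
/-!
The operator `p_n^⊥ = n·∂/∂p_n` is adjoint to multiplication by `p_n`, and it sends `h_m` to
`h_{m-n}`: applied to the generating series `H(t) = ∑ h_m t^m` it gives `t^n H(t)`, as both series
solve the same linear differential equation in `t`. Hence pairing `f` with a product
`h_{b_1} ⋯ h_{b_N}` extracts the coefficient of `x^b` in `f(x_1, …, x_N)`, and the Jacobi–Trudi
determinant turns this into `⟨s_λ, f⟩ = [x^{λ+δ}] a_δ(x) f(x)`, where `δ = (N-1, …, 1, 0)` and
`a_α = det (x_k^{α_i})`. On the other hand `a_δ s_μ = a_{μ+δ}`, because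
`H(t) ∏_{i ≠ k} (1 - x_i t) = 1/(1 - x_k t)` exhibits an alternant as the product of a Jacobi–Trudi
matrix and a matrix independent of `μ`. So `⟨s_λ, s_μ⟩` is the coefficient of `x^{λ+δ}` in
`a_{μ+δ}`, which is `δ_{λμ}` because both exponents are strictly decreasing. Partitions of
different lengths are compared by appending zero parts.
-/

open MvPolynomial

noncomputable section

/-- `z_λ = ∏_i i^{m_i}·m_i!` for the monomial `p^α`, i.e. for `λ = (1^{α 1} 2^{α 2} ⋯)`. -/
def zee (α : ℕ+ →₀ ℕ) : ℚ := α.prod fun i k => ((i : ℕ) : ℚ) ^ k * (Nat.factorial k : ℚ)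

/-- The Hall inner product on `Λ`: the symmetric ℚ-bilinear form determined on the
power-sum basis `{p_λ}` (i.e. the monomials in the `p_i`) by `⟨p_λ, p_μ⟩ = δ_{λμ} z_λ`. -/
def hall (P Q : Lam) : ℚ := ∑ α ∈ P.support, P.coeff α * Q.coeff α * zee α

open scoped PowerSeries

section LinearODE

variable {R : Type*} [CommRing R] [IsAddTorsionFree R]

lemma eq_zero_of_derivative_eq_mul {A F : R⟦X⟧} (h : d⁄dX R F = A * F)
    (h₀ : PowerSeries.constantCoeff F = 0) : F = 0 := by
  ext n
  induction n using Nat.strong_induction_on with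
  | _ n ih =>
    cases n with
    | zero => simpa using h₀
    | succ n =>
      have hn : (n + 1) • PowerSeries.coeff (n + 1) F = 0 := by
        rw [nsmul_eq_mul, mul_comm, Nat.cast_succ, ← PowerSeries.coeff_derivative, h,
          PowerSeries.coeff_mul]
        refine Finset.sum_eq_zero fun ij hij => ?_
        rw [ih ij.2 (Finset.Nat.antidiagonal.snd_lt hij), map_zero, mul_zero]
      exact (nsmul_eq_zero_iff_right n.succ_ne_zero).1 hn

lemma eq_of_derivative_eq_mul_add {A B F G : R⟦X⟧} (hF : d⁄dX R F = A * F + B)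
    (hG : d⁄dX R G = A * G + B)
    (h₀ : PowerSeries.constantCoeff F = PowerSeries.constantCoeff G) : F = G :=
  sub_eq_zero.1 <| eq_zero_of_derivative_eq_mul (A := A) (by rw [map_sub, hF, hG]; ring)
    (by rw [map_sub, h₀, sub_self])

end LinearODE

section Derivation

variable {R A ι : Type*} [CommSemiring R] [CommSemiring A] [Algebra R A]

lemma derivation_prod [DecidableEq ι] (D : Derivation R A A) (s : Finset ι) (f : ι → A) :
    D (∏ i ∈ s, f i) = ∑ i ∈ s, D (f i) * ∏ j ∈ s.erase i, f j := by
  induction s using Finset.induction_on with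
  | empty => simp
  | insert a s ha ih =>
    rw [Finset.prod_insert ha, D.leibniz, ih, Finset.sum_insert ha, Finset.erase_insert ha,
      smul_eq_mul, smul_eq_mul, Finset.mul_sum, add_comm, mul_comm (∏ i ∈ s, f i)]
    congr 1
    refine Finset.sum_congr rfl fun i hi => ?_
    rw [Finset.erase_insert_of_ne (ne_of_mem_of_not_mem hi ha).symm,
      Finset.prod_insert fun h => ha (Finset.mem_of_mem_erase h), mul_left_comm]

/-- The derivation of `A⟦X⟧` applying a derivation `D` of `A` to each coefficient. -/
def coeffwise (D : Derivation R A A) : Derivation R A⟦X⟧ A⟦X⟧ where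
  toFun F := PowerSeries.mk fun n => D (PowerSeries.coeff n F)
  map_add' F G := by ext; simp
  map_smul' r F := by ext; simp
  map_one_eq_zero' := by ext n; simp [PowerSeries.coeff_one, apply_ite D]
  leibniz' F G := by
    ext n
    simp only [LinearMap.coe_mk, AddHom.coe_mk, PowerSeries.coeff_mk, smul_eq_mul, map_add,
      PowerSeries.coeff_mul, map_sum, D.leibniz, Finset.sum_add_distrib]
    rw [← Finset.Nat.sum_antidiagonal_swap
      (f := fun ij => PowerSeries.coeff ij.2 G * D (PowerSeries.coeff ij.1 F))]
    rfl

lemma coeff_coeffwise (D : Derivation R A A) (F : A⟦X⟧) (n : ℕ) :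
    PowerSeries.coeff n (coeffwise D F) = D (PowerSeries.coeff n F) :=
  PowerSeries.coeff_mk n fun k => D (PowerSeries.coeff k F)

lemma derivative_coeffwise (D : Derivation R A A) (F : A⟦X⟧) :
    d⁄dX A (coeffwise D F) = coeffwise D (d⁄dX A F) := by
  ext n
  simp only [PowerSeries.coeff_derivative, coeff_coeffwise, D.leibniz, smul_eq_mul]
  simp [mul_comm]

lemma derivative_map {S : Type*} [CommSemiring S] (φ : R →+* S) (F : R⟦X⟧) :
    d⁄dX S (PowerSeries.map φ F) = PowerSeries.map φ (d⁄dX R F) := by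
  ext n
  simp [PowerSeries.coeff_derivative]

end Derivation

section Hall

/-- The Hall inner product `hall` as a bilinear form, defined through the monomial basis so that
linearity in both arguments comes for free. -/
def hallForm : LinearMap.BilinForm ℚ Lam :=
  (basisMonomials ℕ+ ℚ).constr ℚ fun α => zee α • lcoeff ℚ α

lemma hallForm_apply (P Q : Lam) : hallForm P Q = hall P Q := by
  rw [hallForm, Module.Basis.constr_apply, Finsupp.sum, LinearMap.sum_apply, hall]
  refine Finset.sum_congr rfl fun α _ => ?_
  change coeff α P * (zee α * coeff α Q) = coeff α P * coeff α Q * zee α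
  ring

lemma hallForm_monomial_left (α : ℕ+ →₀ ℕ) (c : ℚ) (Q : Lam) :
    hallForm (monomial α c) Q = c * zee α * coeff α Q := by
  have h : monomial α c = c • basisMonomials ℕ+ ℚ α := by simp [smul_monomial]
  rw [h, hallForm, map_smul, Module.Basis.constr_basis, mul_assoc]
  rfl

lemma hallForm_isSymm : hallForm.IsSymm := by
  refine ⟨fun P Q => ?_⟩
  induction P using MvPolynomial.induction_on' with
  | monomial α a =>
    induction Q using MvPolynomial.induction_on' with
    | monomial β b =>
      rw [hallForm_monomial_left, hallForm_monomial_left, coeff_monomial, coeff_monomial]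
      by_cases h : α = β
      · rw [h, if_pos rfl, if_pos rfl]
        ring
      · rw [if_neg h, if_neg (Ne.symm h), mul_zero, mul_zero]
    | add Q Q' hQ hQ' => simp only [map_add, hQ, hQ', LinearMap.add_apply]
  | add P P' hP hP' => simp only [map_add, hP, hP', LinearMap.add_apply]

lemma zee_add_single (α : ℕ+ →₀ ℕ) (n : ℕ+) :
    zee (α + Finsupp.single n 1) = n * (α n + 1) * zee α := by
  have zee_eq_mul_erase (β : ℕ+ →₀ ℕ) :
      zee β = ((n : ℕ) : ℚ) ^ β n * (β n).factorial * zee (β.erase n) :=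
    (Finsupp.mul_prod_erase' β n _ fun i => by simp).symm
  rw [zee_eq_mul_erase, zee_eq_mul_erase α, Finsupp.erase_add, Finsupp.erase_single, add_zero,
    Finsupp.add_apply, Finsupp.single_eq_same, Nat.factorial_succ, pow_succ]
  push_cast
  ring

/-- The derivation `p_n^⊥ = n·∂/∂p_n` of `Λ`, adjoint to multiplication by `p_n`. -/
def psumPerp (n : ℕ+) : Derivation ℚ Lam Lam := ((n : ℕ) : ℚ) • pderiv n

lemma hallForm_mul_X (P Q : Lam) (n : ℕ+) :
    hallForm P (Q * X n) = hallForm (psumPerp n P) Q := by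
  rw [hallForm_isSymm.eq P, hallForm_isSymm.eq _ Q]
  induction Q using MvPolynomial.induction_on' with
  | monomial α c =>
    rw [X, monomial_mul, hallForm_monomial_left, hallForm_monomial_left, zee_add_single, psumPerp,
      Derivation.smul_apply, coeff_smul, coeff_pderiv, smul_eq_mul]
    ring
  | add Q Q' hQ hQ' => simp only [add_mul, map_add, LinearMap.add_apply, hQ, hQ']

end Hall

section CompleteSymmetric

lemma derivative_mk_genFam (c : ℕ → ℚ) :
    d⁄dX Lam (PowerSeries.mk (genFam c)) =
      (PowerSeries.mk fun n => c (n + 1) • pp n.succPNat) * PowerSeries.mk (genFam c) := by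
  ext1 n
  rw [PowerSeries.coeff_derivative, PowerSeries.coeff_mk, genFam, PowerSeries.coeff_mul,
    Finset.Nat.sum_antidiagonal_eq_sum_range_succ_mk, smul_mul_assoc, mul_comm,
    inv_smul_eq_iff₀ (by positivity), smul_eq_C_mul]
  simp [Nat.succPNat]

/-- The generating series `∑ p_{n+1} tⁿ` of the power sums, whose index is shifted because it is
the logarithmic derivative of `completeSeries`. -/
def psumSeries : Lam⟦X⟧ := PowerSeries.mk fun n => pp n.succPNat

/-- The generating series `∑ h_n tⁿ` of the complete homogeneous symmetric functions. -/
def completeSeries : Lam⟦X⟧ := PowerSeries.mk hh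

lemma hh_zero : hh 0 = 1 := by rw [hh, genFam]

lemma coeff_completeSeries (n : ℕ) : PowerSeries.coeff n completeSeries = hh n :=
  PowerSeries.coeff_mk n hh

lemma constantCoeff_completeSeries : PowerSeries.constantCoeff completeSeries = 1 := by
  rw [← PowerSeries.coeff_zero_eq_constantCoeff_apply, coeff_completeSeries, hh_zero]

lemma derivative_completeSeries : d⁄dX Lam completeSeries = psumSeries * completeSeries :=
  (derivative_mk_genFam fun _ => 1).trans (by simp only [one_smul]; rfl)

lemma hZ_of_neg {m : ℤ} (h : m < 0) : hZ m = 0 := if_neg h.not_ge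

lemma hZ_natCast_sub (m n : ℕ) :
    hZ (m - n) = PowerSeries.coeff m (PowerSeries.X ^ n * completeSeries) := by
  rw [PowerSeries.coeff_X_pow_mul', coeff_completeSeries]
  split_ifs with h
  · rw [← Nat.cast_sub h, hZ, if_pos (Int.natCast_nonneg _), Int.toNat_natCast]
  · exact hZ_of_neg (by omega)

lemma hZ_natCast (m : ℕ) : hZ m = hh m := by
  simpa [coeff_completeSeries] using hZ_natCast_sub m 0

lemma hZ_zero : hZ 0 = 1 := (hZ_natCast 0).trans hh_zero

lemma constantCoeff_pp (n : ℕ+) : constantCoeff (pp n) = 0 := constantCoeff_X ℚ n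

lemma constantCoeff_hZ (m : ℤ) : constantCoeff (hZ m) = if m = 0 then (1 : ℚ) else 0 := by
  obtain hm | ⟨k, rfl⟩ := (lt_or_ge m 0).imp_right Int.eq_ofNat_of_zero_le
  · rw [hZ_of_neg hm, map_zero, if_neg hm.ne]
  · rw [hZ_natCast]
    cases k with
    | zero => simp [hh_zero]
    | succ k =>
      rw [hh, genFam, constantCoeff_smul, map_sum, Finset.sum_eq_zero, smul_zero, if_neg (by omega)]
      intro i _
      rw [one_smul, map_mul]
      exact mul_eq_zero_of_left (constantCoeff_pp i.succPNat) _

lemma coeffwise_psumPerp_psumSeries (n : ℕ+) :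
    coeffwise (psumPerp n) psumSeries = d⁄dX Lam (PowerSeries.X ^ (n : ℕ)) := by
  ext1 m
  simp only [coeff_coeffwise, psumSeries, psumPerp, pp, PowerSeries.coeff_mk,
    PowerSeries.coeff_derivative, PowerSeries.coeff_X_pow, Derivation.smul_apply, pderiv_X,
    Pi.single_apply]
  by_cases h : m.succPNat = n
  · subst h
    simp [smul_eq_C_mul]
  · have h' : m + 1 ≠ (n : ℕ) := fun h' => h (PNat.eq h')
    rw [if_neg h, if_neg h', smul_zero, zero_mul]

/-- Both sides solve `F' = P F + (tⁿ)' H`, where `P = psumSeries` and `H = completeSeries`. -/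
lemma coeffwise_psumPerp_completeSeries (n : ℕ+) :
    coeffwise (psumPerp n) completeSeries = PowerSeries.X ^ (n : ℕ) * completeSeries := by
  refine eq_of_derivative_eq_mul_add (A := psumSeries)
    (B := d⁄dX Lam (PowerSeries.X ^ (n : ℕ)) * completeSeries) ?_ ?_ ?_
  · rw [derivative_coeffwise, derivative_completeSeries, Derivation.leibniz,
      coeffwise_psumPerp_psumSeries, smul_eq_mul, smul_eq_mul, mul_comm completeSeries]
  · rw [Derivation.leibniz, derivative_completeSeries, smul_eq_mul, smul_eq_mul]
    ring
  · rw [← PowerSeries.coeff_zero_eq_constantCoeff_apply, coeff_coeffwise, coeff_completeSeries,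
      hh_zero, Derivation.map_one_eq_zero]
    simp [n.ne_zero]

lemma psumPerp_hZ (n : ℕ+) (m : ℤ) : psumPerp n (hZ m) = hZ (m - n) := by
  obtain hm | ⟨k, rfl⟩ := (lt_or_ge m 0).imp_right Int.eq_ofNat_of_zero_le
  · rw [hZ_of_neg hm, map_zero, hZ_of_neg (by have := n.pos; omega)]
  · rw [hZ_natCast, ← coeff_completeSeries, ← coeff_coeffwise, coeffwise_psumPerp_completeSeries]
    exact (hZ_natCast_sub k n).symm

lemma psumPerp_prod_hZ {ι : Type*} [Fintype ι] [DecidableEq ι] (n : ℕ+) (m : ι → ℤ) :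
    psumPerp n (∏ i, hZ (m i)) = ∑ i, ∏ j, hZ ((m - Pi.single i (n : ℤ) : ι → ℤ) j) := by
  rw [derivation_prod]
  refine Finset.sum_congr rfl fun i _ => ?_
  rw [← Finset.mul_prod_erase _ _ (Finset.mem_univ i), psumPerp_hZ, Pi.sub_apply, Pi.single_eq_same]
  congr 1
  refine Finset.prod_congr rfl fun j hj => ?_
  rw [Pi.sub_apply, Pi.single_eq_of_ne (Finset.ne_of_mem_erase hj), sub_zero]

end CompleteSymmetric

section Specialization

variable (ι : Type*) [Fintype ι]

/-- The specialization `f ↦ f(x)` of symmetric functions to finitely many variables `x_i`,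
`i : ι`. -/
def toVariables : Lam →ₐ[ℚ] MvPolynomial ι ℚ := aeval fun n => psum ι ℚ n

variable {ι}

lemma toVariables_X (n : ℕ+) : toVariables ι (X n) = psum ι ℚ n := aeval_X _ n

/-- By induction on `f`: multiplication of `f` by `p_n` amounts to applying `p_n^⊥` to the product,
that is, to lowering one of the indices by `n`. -/
lemma hallForm_prod_hZ (b c : ι →₀ ℕ) (f : Lam) :
    hallForm (∏ i, hZ (b i - c i)) f = coeff b (monomial c 1 * toVariables ι f) := by
  classical
  induction f using MvPolynomial.induction_on generalizing c with
  | C a =>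
    rw [hallForm_isSymm.eq, ← monomial_zero', hallForm_monomial_left, ← constantCoeff_eq, map_prod]
    simp only [constantCoeff_hZ, Finset.prod_ite_zero, Finset.prod_const_one]
    have hbc : (∀ i ∈ Finset.univ, (b i : ℤ) - c i = 0) ↔ c = b := by
      rw [eq_comm (a := c), Finsupp.ext_iff]
      simp only [Finset.mem_univ, forall_const, sub_eq_zero, Nat.cast_inj]
    have hzee : zee 0 = 1 := Finsupp.prod_zero_index
    rw [hzee, mul_one, monomial_zero', ← algebraMap_eq, AlgHom.commutes, algebraMap_eq,
      mul_comm (monomial c 1), coeff_C_mul, coeff_monomial]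
    simp only [hbc]
  | add f g hf hg => rw [map_add, map_add, mul_add, coeff_add, hf, hg]
  | mul_X f n hf =>
    have lower_index (i : ι) :
        hallForm (∏ j, hZ (((fun j => (b j : ℤ) - c j) - Pi.single i (n : ℤ) : ι → ℤ) j)) f =
          coeff b (monomial c 1 * (X i ^ (n : ℕ) * toVariables ι f)) := by
      rw [X_pow_eq_monomial, ← mul_assoc, monomial_mul, one_mul, ← hf]
      congr 2
      refine Finset.prod_congr rfl fun j _ => ?_
      simp [Finsupp.single_apply, Pi.single_apply, eq_comm, sub_sub]
    rw [hallForm_mul_X, psumPerp_prod_hZ, map_mul, toVariables_X, psum, mul_comm (toVariables ι f),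
      Finset.sum_mul, Finset.mul_sum, coeff_sum, map_sum, LinearMap.sum_apply]
    exact Finset.sum_congr rfl fun i _ => lower_index i

end Specialization

section Bialternant

variable {R ι : Type*} [CommRing R]

/-- The geometric series `∑ xⁿ tⁿ`. -/
def geomSeries (x : R) : R⟦X⟧ := PowerSeries.mk fun n => x ^ n

lemma coeff_geomSeries (x : R) (n : ℕ) : PowerSeries.coeff n (geomSeries x) = x ^ n :=
  PowerSeries.coeff_mk n fun k => x ^ k

lemma constantCoeff_geomSeries (x : R) : PowerSeries.constantCoeff (geomSeries x) = 1 := by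
  rw [← PowerSeries.coeff_zero_eq_constantCoeff_apply, coeff_geomSeries, pow_zero]

lemma geomSeries_mul_one_sub (x : R) :
    geomSeries x * (1 - PowerSeries.C x * PowerSeries.X) = 1 := by
  ext1 n
  rw [mul_sub, mul_one, ← mul_assoc, map_sub]
  cases n with
  | zero => simp [coeff_geomSeries]
  | succ n =>
    rw [PowerSeries.coeff_succ_mul_X, PowerSeries.coeff_mul_C]
    simp [coeff_geomSeries, PowerSeries.coeff_one, pow_succ]

lemma derivative_geomSeries (x : R) :
    d⁄dX R (geomSeries x) = (PowerSeries.mk fun n => x ^ (n + 1)) * geomSeries x := by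
  ext1 n
  rw [PowerSeries.coeff_derivative, PowerSeries.coeff_mul, coeff_geomSeries,
    Finset.sum_congr rfl (g := fun _ => x ^ (n + 1)) fun ij hij => by
      rw [PowerSeries.coeff_mk, coeff_geomSeries, ← pow_add, add_right_comm,
        Finset.HasAntidiagonal.mem_antidiagonal.1 hij]]
  simp [mul_comm]

/-- The polynomial `∏_{i ≠ k} (1 - x_i t)`. Its coefficients are the entries of the matrix that
turns the Jacobi–Trudi matrix into an alternant. -/
def cofactorPoly [Fintype ι] [DecidableEq ι] (x : ι → R) (k : ι) : Polynomial R :=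
  ∏ i ∈ Finset.univ.erase k, (1 - Polynomial.C (x i) * Polynomial.X)

lemma natDegree_cofactorPoly_lt [Fintype ι] [DecidableEq ι] (x : ι → R) (k : ι) :
    (cofactorPoly x k).natDegree < Fintype.card ι := by
  calc (cofactorPoly x k).natDegree
      ≤ ∑ i ∈ Finset.univ.erase k, Polynomial.natDegree (1 - Polynomial.C (x i) * Polynomial.X) :=
        Polynomial.natDegree_prod_le _ _
    _ ≤ (Finset.univ.erase k).card • 1 :=
        Finset.sum_le_card_nsmul _ _ 1 fun i _ => by compute_degree
    _ < Fintype.card ι := by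
        rw [smul_eq_mul, mul_one]
        exact Finset.card_erase_lt_of_mem (Finset.mem_univ k)

lemma prod_geomSeries_mul_cofactorPoly [Fintype ι] [DecidableEq ι] (x : ι → R) (k : ι) :
    (∏ i, geomSeries (x i)) * (cofactorPoly x k : R⟦X⟧) = geomSeries (x k) := by
  rw [← Finset.mul_prod_erase _ _ (Finset.mem_univ k), mul_assoc, cofactorPoly,
    ← Polynomial.coeToPowerSeries.ringHom_apply, map_prod, ← Finset.prod_mul_distrib,
    Finset.prod_eq_one, mul_one]
  intro i _
  simpa using geomSeries_mul_one_sub (x i)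

variable [Fintype ι]

lemma map_completeSeries :
    PowerSeries.map (toVariables ι : Lam →+* MvPolynomial ι ℚ) completeSeries =
      ∏ i : ι, geomSeries (X i) := by
  classical
  have map_psumSeries : PowerSeries.map (toVariables ι : Lam →+* MvPolynomial ι ℚ) psumSeries =
      ∑ i : ι, PowerSeries.mk fun n => X i ^ (n + 1) := by
    ext1 n
    rw [map_sum]
    simp only [PowerSeries.coeff_map, PowerSeries.coeff_mk, psumSeries, pp, RingHom.coe_coe,
      toVariables_X, psum, Nat.succPNat_coe, Nat.succ_eq_add_one]
  refine eq_of_derivative_eq_mul_add (B := 0)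
    (A := PowerSeries.map (toVariables ι : Lam →+* MvPolynomial ι ℚ) psumSeries) ?_ ?_ ?_
  · rw [derivative_map, derivative_completeSeries, map_mul, add_zero]
  · rw [derivation_prod, map_psumSeries, Finset.sum_mul, add_zero]
    refine Finset.sum_congr rfl fun i _ => ?_
    rw [derivative_geomSeries, mul_assoc,
      Finset.mul_prod_erase _ (fun i : ι => geomSeries (X i)) (Finset.mem_univ i)]
  · rw [map_prod, Finset.prod_congr rfl fun i _ => constantCoeff_geomSeries (X i),
      Finset.prod_const_one]
    exact (MvPowerSeries.constantCoeff_map _ _).trans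
      ((congrArg _ constantCoeff_completeSeries).trans (map_one _))

lemma toVariables_hZ_natCast_sub (m n : ℕ) :
    toVariables ι (hZ (m - n)) =
      PowerSeries.coeff m (PowerSeries.X ^ n * ∏ i : ι, geomSeries (X i)) := by
  rw [hZ_natCast_sub, ← map_completeSeries]
  exact (PowerSeries.coeff_map _ _ _).symm.trans (by simp)

/-- Only coefficients below `card ι` occur, as `cofactorPoly` has degree `card ι - 1`. -/
lemma sum_toVariables_hZ_mul_coeff_cofactorPoly [DecidableEq ι] (k : ι) (e : ℕ) :
    ∑ n ∈ Finset.range (Fintype.card ι),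
      toVariables ι (hZ (e - n)) * (cofactorPoly (X : ι → MvPolynomial ι ℚ) k).coeff n =
      X k ^ e := by
  set q := cofactorPoly (X : ι → MvPolynomial ι ℚ) k with hq
  have expand : (q : (MvPolynomial ι ℚ)⟦X⟧) =
      ∑ n ∈ Finset.range (Fintype.card ι), PowerSeries.C (q.coeff n) * PowerSeries.X ^ n := by
    conv_lhs => rw [q.as_sum_range_C_mul_X_pow' (natDegree_cofactorPoly_lt X k)]
    rw [← Polynomial.coeToPowerSeries.ringHom_apply, map_sum]
    simp
  calc ∑ n ∈ Finset.range (Fintype.card ι), toVariables ι (hZ (e - n)) * q.coeff n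
      = PowerSeries.coeff e ((∏ i : ι, geomSeries (X i)) * (q : (MvPolynomial ι ℚ)⟦X⟧)) := by
        rw [expand, Finset.mul_sum, map_sum]
        refine Finset.sum_congr rfl fun n _ => ?_
        rw [toVariables_hZ_natCast_sub, mul_left_comm, PowerSeries.coeff_C_mul,
          mul_comm (q.coeff n), mul_comm (∏ i : ι, geomSeries (X i))]
    _ = X k ^ e := by
        rw [hq, prod_geomSeries_mul_cofactorPoly, coeff_geomSeries]

/-- The alternant `a_α = det (x_k^{α_i})`. -/
def alternant [DecidableEq ι] (a : ι → ℕ) : MvPolynomial ι ℚ :=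
  (Matrix.of fun i k => X k ^ a i).det

/-- The staircase `δ = (N - 1, …, 1, 0)`. -/
def staircase (N : ℕ) (i : Fin N) : ℕ := i.rev

lemma strictAnti_staircase (N : ℕ) : StrictAnti (staircase N) := fun _ _ h => Fin.rev_lt_rev.2 h

variable {N : ℕ}

lemma schur_eq_det_staircase (mu : Fin N → ℕ) :
    schur (fun i => (mu i : ℤ)) = (Matrix.of fun i j =>
      hZ (((mu + staircase N) i : ℕ) - (staircase N j : ℕ))).det := by
  rw [schur]
  congr 2
  ext1 i
  ext1 j
  congr 1
  simp only [Pi.add_apply, staircase, Fin.val_rev]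
  omega

lemma schur_zero : schur (fun _ : Fin N => (0 : ℤ)) = 1 := by
  rw [schur, Matrix.det_of_isUpperTriangular]
  · simp [hZ_zero]
  · intro i j hij
    have hlt : (j : ℕ) < i := hij
    exact hZ_of_neg (by omega)

lemma toVariables_schur_mul_det (mu : Fin N → ℕ) :
    toVariables (Fin N) (schur fun i => (mu i : ℤ)) *
        (Matrix.of fun j k => (cofactorPoly X k).coeff (staircase N j)).det =
      alternant (mu + staircase N) := by
  rw [schur_eq_det_staircase, AlgHom.map_det, ← Matrix.det_mul, alternant]
  congr 1
  ext1 i k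
  rw [Matrix.of_apply,
    ← sum_toVariables_hZ_mul_coeff_cofactorPoly k ((mu + staircase N) i), Fintype.card_fin,
    ← Fin.sum_univ_eq_sum_range (fun n => toVariables (Fin N) (hZ (((mu + staircase N) i : ℕ) - n))
      * (cofactorPoly X k).coeff n), ← Equiv.sum_comp Fin.revPerm, Matrix.mul_apply]
  rfl

/-- The bialternant formula `s_μ a_δ = a_{μ+δ}`. The case `μ = 0` identifies the determinant of
`toVariables_schur_mul_det` as `a_δ`. -/
lemma toVariables_schur_mul_alternant (mu : Fin N → ℕ) :
    toVariables (Fin N) (schur fun i => (mu i : ℤ)) * alternant (staircase N) =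
      alternant (mu + staircase N) := by
  have hdet : (Matrix.of fun j k => (cofactorPoly X k).coeff (staircase N j)).det =
      alternant (staircase N) := by
    simpa [schur_zero] using toVariables_schur_mul_det (0 : Fin N → ℕ)
  rw [← hdet, toVariables_schur_mul_det]

end Bialternant

section Orthonormality

variable {ι : Type*} [Fintype ι] [DecidableEq ι] {N : ℕ}

lemma alternant_eq_sum_monomial (a : ι → ℕ) :
    alternant a = ∑ σ : Equiv.Perm ι,
      Equiv.Perm.sign σ • monomial (Finsupp.equivFunOnFinite.symm (a ∘ σ)) (1 : ℚ) := by
  rw [alternant, Matrix.det_apply]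
  refine Finset.sum_congr rfl fun σ _ => ?_
  rw [monomial_eq, Finsupp.prod_fintype _ _ fun i => pow_zero (X i)]
  simp

lemma hallForm_det_hZ (a b : ι → ℕ) (f : Lam) :
    hallForm (Matrix.of fun i j => hZ (a i - b j)).det f =
      coeff (Finsupp.equivFunOnFinite.symm a) (alternant b * toVariables ι f) := by
  rw [← Matrix.det_transpose, Matrix.det_apply, alternant_eq_sum_monomial, Finset.sum_mul,
    coeff_sum, map_sum, LinearMap.sum_apply]
  refine Finset.sum_congr rfl fun σ _ => ?_
  rw [smul_mul_assoc, Units.smul_def, Units.smul_def, map_zsmul, LinearMap.smul_apply, coeff_smul,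
    ← hallForm_prod_hZ]
  rfl

lemma perm_eq_one_of_strictAnti {α : Type*} [Preorder α] {a b : Fin N → α}
    (ha : StrictAnti a) (hb : StrictAnti b) {σ : Equiv.Perm (Fin N)} (h : a ∘ σ = b) : σ = 1 := by
  have hσ : StrictMono σ := fun i j hij => by
    rw [← ha.lt_iff_gt]
    subst h
    exact hb hij
  exact Equiv.coe_fn_injective ((hσ.range_inj strictMono_id).1 (by simp [σ.surjective.range_eq]))

lemma coeff_alternant {a b : Fin N → ℕ} (ha : StrictAnti a) (hb : StrictAnti b) :
    coeff (Finsupp.equivFunOnFinite.symm b) (alternant a) = if a = b then 1 else 0 := by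
  rw [alternant_eq_sum_monomial, coeff_sum, Finset.sum_eq_single 1]
  · simp
  · intro σ _ hσ
    rw [Units.smul_def, coeff_smul, coeff_monomial, if_neg, smul_zero]
    exact fun h => hσ (perm_eq_one_of_strictAnti ha hb (Finsupp.equivFunOnFinite.symm.injective h))
  · simp

lemma hallForm_schur_schur {lam mu : Fin N → ℕ} (hlam : Antitone lam) (hmu : Antitone mu) :
    hallForm (schur fun i => (lam i : ℤ)) (schur fun i => (mu i : ℤ)) =
      if lam = mu then 1 else 0 := by
  have strictAnti_add_staircase {nu : Fin N → ℕ} (hnu : Antitone nu) :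
      StrictAnti (nu + staircase N) := hnu.add_strictAnti (strictAnti_staircase N)
  calc hallForm (schur fun i => (lam i : ℤ)) (schur fun i => (mu i : ℤ))
      = coeff (Finsupp.equivFunOnFinite.symm (lam + staircase N))
          (alternant (staircase N) * toVariables (Fin N) (schur fun i => (mu i : ℤ))) := by
        rw [schur_eq_det_staircase lam, hallForm_det_hZ]
    _ = coeff (Finsupp.equivFunOnFinite.symm (lam + staircase N))
          (alternant (mu + staircase N)) := by
        rw [mul_comm, toVariables_schur_mul_alternant]
    _ = if lam = mu then 1 else 0 := by
        rw [coeff_alternant (strictAnti_add_staircase hmu) (strictAnti_add_staircase hlam)]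
        exact if_congr ((add_left_inj _).trans eq_comm) rfl rfl

end Orthonormality

section Padding

variable {l m : ℕ}

lemma antitone_append_zero {lam : Fin l → ℕ} (h : Antitone lam) :
    Antitone (Fin.append lam (0 : Fin m → ℕ)) := by
  intro i j hij
  induction j using Fin.addCases with
  | left j =>
    induction i using Fin.addCases with
    | left i => simpa using h hij
    | right i => exact absurd hij (by rw [Fin.le_def, Fin.val_natAdd, Fin.val_castAdd]; omega)
  | right j => simp

lemma schur_append_zero (lam : Fin l → ℕ) :
    schur (fun i => ((Fin.append lam (0 : Fin m → ℕ) i : ℕ) : ℤ)) = schur fun i => (lam i : ℤ) := by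
  have blocks :
      (Matrix.of fun i j : Fin (l + m) =>
        hZ ((Fin.append lam (0 : Fin m → ℕ) i : ℕ) - (i : ℤ) + (j : ℤ))).submatrix
          finSumFinEquiv finSumFinEquiv =
      Matrix.fromBlocks (.of fun i j => hZ (lam i - (i.1 : ℤ) + (j.1 : ℤ)))
        (.of fun i j => hZ (lam i - (i.1 : ℤ) + ((l + j.1 : ℕ) : ℤ)))
        0 (.of fun i j => hZ (0 - (i.1 : ℤ) + (j.1 : ℤ))) := by
    ext1 (i | i) (j | j)
    · simp
    · simp
    · simpa using hZ_of_neg (by omega)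
    · simp
  rw [schur, ← Matrix.det_submatrix_equiv_self finSumFinEquiv, blocks, Matrix.det_fromBlocks_zero₂₁]
  exact (congrArg (_ * ·) schur_zero).trans (mul_one _)

lemma append_zero_eq_iff {lam : Fin l → ℕ} {mu : Fin (l + m) → ℕ} (hmu : ∀ i, 1 ≤ mu i) :
    Fin.append lam 0 = mu ↔ List.ofFn lam = List.ofFn mu := by
  cases m with
  | zero =>
    rw [List.ofFn_inj]
    simp [Fin.append_right_nil]
  | succ m =>
    refine iff_of_false (fun h => ?_) fun h => ?_
    · have last_part : mu (Fin.natAdd l (Fin.last m)) = 0 := by rw [← h, Fin.append_right]; rfl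
      exact absurd (hmu _) (by rw [last_part]; decide)
    · have length_eq := congrArg List.length h
      simp only [List.length_ofFn] at length_eq
      omega

end Padding

/-- the Schur functions form an orthonormal family for the Hall inner
product: for all partitions `λ, μ` (with all parts ≥ 1, so that the indexing is
unambiguous), `⟨s_λ, s_μ⟩ = δ_{λ,μ}`, where `s_λ = det (h_{λ_i − i + j})`. -/
theorem schur_orthonormal (l₁ l₂ : ℕ) (lam : Fin l₁ → ℕ) (mu : Fin l₂ → ℕ)
    (hlam : Antitone lam) (hmu : Antitone mu)
    (hlam1 : ∀ i, 1 ≤ lam i) (hmu1 : ∀ i, 1 ≤ mu i) :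
    hall (schur fun i => (lam i : ℤ)) (schur fun i => (mu i : ℤ))
      = if List.ofFn lam = List.ofFn mu then 1 else 0 := by
  rw [← hallForm_apply]
  wlog h : l₁ ≤ l₂ generalizing l₁ l₂
  · rw [hallForm_isSymm.eq, this l₂ l₁ mu lam hmu hlam hmu1 hlam1 (le_of_not_ge h)]
    exact if_congr eq_comm rfl rfl
  obtain ⟨m, rfl⟩ := Nat.exists_eq_add_of_le h
  rw [← schur_append_zero (m := m) lam, hallForm_schur_schur (antitone_append_zero hlam) hmu]
  exact if_congr (append_zero_eq_iff hmu1) rfl rfl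
end
end
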